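/- Let A, G be d×d symmetric positive-definite matrices with G ⪰ A, and let L ∈ ℝ^{d×d} satisfy LᵀL = G⁻¹. Let U ∈ ℝ^{d×k} have i.i.d. N(0,1) entries and consider the block BFGS update with scaled directions: G₊ = BlockBFGS(G, A, LᵀU). Then E[tr(A⁻¹(G₊ − A))] ≤ (1 − k/d)·tr(A⁻¹(G − A)). -/

import Mathlib

/-!
Write `P = U (UᵀU)⁻¹ Uᵀ` and `W = G Lᵀ`. Since `LᵀL = G⁻¹`, the matrix `L G Lᵀ` is the identity and
`W Wᵀ = G`. Hence, whenever `U` has full column rank, the update in the directions `V = LᵀU` gives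
`σ_A(G₊) = tr(A⁻¹G) - d + k - tr(Wᵀ A⁻¹ W P)` (`trace_blockBFGS_scaled`), and the inequality is in
fact an equality as soon as `E[P] = (k/d) I`.

For the latter, flipping the sign of one row of `U` preserves the Gaussian law and changes the sign
of the off-diagonal entries of `P` in that row, so these have mean `0` (`integral_colProj_offDiag`);
permuting rows shows that the diagonal entries share the same mean (`integral_colProj_diag_eq`);
and `tr P = k` almost surely, which determines it (`integral_colProj_diag`). Almost sure full rank
(`ae_mulVec_injective`) comes from the top `k × k` minor, which along the lines `u + t E` is a
characteristic polynomial in `t`.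
-/

open Matrix MeasureTheory ProbabilityTheory

/-- The block BFGS update `BlockBFGS(G, A, V) = G − GV(VᵀGV)⁻¹VᵀG + AV(VᵀAV)⁻¹VᵀA`. -/
noncomputable def blockBFGS {d k : ℕ} (G A : Matrix (Fin d) (Fin d) ℝ)
    (V : Matrix (Fin d) (Fin k) ℝ) : Matrix (Fin d) (Fin d) ℝ :=
  G - G * V * (Vᵀ * G * V)⁻¹ * Vᵀ * G + A * V * (Vᵀ * A * V)⁻¹ * Vᵀ * A

/-- The matrix `U (UᵀU)⁻¹ Uᵀ`, the orthogonal projection onto the column space of `U` when `U` has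
full column rank; it is `0` otherwise, because the inverse of a singular matrix is `0`. -/
noncomputable def colProj {d k : ℕ} (U : Matrix (Fin d) (Fin k) ℝ) : Matrix (Fin d) (Fin d) ℝ :=
  U * (Uᵀ * U)⁻¹ * Uᵀ

/-- The standard Gaussian measure on `d × k` matrices, encoded as functions. -/
noncomputable abbrev gaussMat (d k : ℕ) : Measure (Fin d → Fin k → ℝ) :=
  Measure.pi fun _ : Fin d => Measure.pi fun _ : Fin k => gaussianReal 0 1

/-! ### The projection matrix -/

lemma colProj_transpose {d k : ℕ} (U : Matrix (Fin d) (Fin k) ℝ) :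
    (colProj U)ᵀ = colProj U := by
  simp [colProj, Matrix.transpose_mul, Matrix.transpose_nonsing_inv, Matrix.mul_assoc]

lemma colProj_mul_self {d k : ℕ} (U : Matrix (Fin d) (Fin k) ℝ) :
    colProj U * colProj U = colProj U := by
  by_cases h : IsUnit (Uᵀ * U).det
  · calc colProj U * colProj U
        = U * (((Uᵀ * U)⁻¹ * (Uᵀ * U)) * (Uᵀ * U)⁻¹) * Uᵀ := by
          simp only [colProj, Matrix.mul_assoc]
      _ = colProj U := by rw [Matrix.nonsing_inv_mul _ h, Matrix.one_mul, colProj]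
  · simp [colProj, Matrix.nonsing_inv_apply_not_isUnit _ h]

lemma colProj_trace {d k : ℕ} {U : Matrix (Fin d) (Fin k) ℝ} (h : IsUnit (Uᵀ * U).det) :
    (colProj U).trace = k := by
  rw [colProj, Matrix.trace_mul_comm, ← Matrix.mul_assoc, Matrix.mul_nonsing_inv _ h]
  simp

/-- For a symmetric idempotent `P`, `P i i = ∑ j, P i j ^ 2`, which bounds every entry by `1`. -/
lemma abs_colProj_apply_le_one {d k : ℕ} (U : Matrix (Fin d) (Fin k) ℝ) (i j : Fin d) :
    |colProj U i j| ≤ 1 := by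
  have hsum : ∑ l, colProj U i l ^ 2 = colProj U i i := by
    conv_rhs => rw [← colProj_mul_self, Matrix.mul_apply]
    refine Finset.sum_congr rfl fun l _ => ?_
    have hsymm : colProj U l i = colProj U i l := congrFun (congrFun (colProj_transpose U) i) l
    rw [hsymm, sq]
  have hle (l : Fin d) : colProj U i l ^ 2 ≤ colProj U i i := by
    rw [← hsum]
    exact Finset.single_le_sum (f := fun l => colProj U i l ^ 2)
      (fun _ _ => sq_nonneg _) (Finset.mem_univ l)
  have hi := hle i
  have hj := hle j
  rw [abs_le_one_iff_mul_self_le_one]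
  nlinarith

lemma colProj_orthogonal_mul {d k : ℕ} (U : Matrix (Fin d) (Fin k) ℝ)
    (Q : Matrix (Fin d) (Fin d) ℝ) (hQ : Qᵀ * Q = 1) :
    colProj (Q * U) = Q * colProj U * Qᵀ := by
  have h : (Q * U)ᵀ * (Q * U) = Uᵀ * U := by
    calc (Q * U)ᵀ * (Q * U) = Uᵀ * (Qᵀ * Q) * U := by
          simp only [Matrix.transpose_mul, Matrix.mul_assoc]
      _ = Uᵀ * U := by rw [hQ, Matrix.mul_one]
  rw [colProj, h, colProj]
  simp only [Matrix.transpose_mul, Matrix.mul_assoc]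

lemma colProj_submatrix {d k : ℕ} (U : Matrix (Fin d) (Fin k) ℝ) (σ : Equiv.Perm (Fin d)) :
    colProj (U.submatrix σ id) = (colProj U).submatrix σ σ := by
  have h : (U.submatrix σ id)ᵀ * (U.submatrix σ id) = Uᵀ * U := by
    rw [Matrix.transpose_submatrix, Matrix.submatrix_mul_equiv, Matrix.submatrix_id_id]
  rw [colProj, h, colProj]
  rfl

lemma measurable_colProj_apply {d k : ℕ} (i j : Fin d) :
    Measurable fun u : Fin d → Fin k → ℝ => colProj (Matrix.of u) i j := by
  have hS (a b : Fin k) : Continuous fun u : Fin d → Fin k → ℝ =>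
      ((Matrix.of u)ᵀ * Matrix.of u) a b := by
    simp only [Matrix.mul_apply, Matrix.transpose_apply, Matrix.of_apply]
    fun_prop
  have hSc : Continuous fun u : Fin d → Fin k → ℝ => (Matrix.of u)ᵀ * Matrix.of u :=
    continuous_matrix hS
  have hinv (a b : Fin k) : Measurable fun u : Fin d → Fin k → ℝ =>
      ((Matrix.of u)ᵀ * Matrix.of u)⁻¹ a b := by
    simp only [Matrix.inv_def, Ring.inverse_eq_inv', Matrix.smul_apply, smul_eq_mul]
    exact hSc.matrix_det.measurable.inv.mul (hSc.matrix_adjugate.matrix_elem a b).measurable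
  simp only [colProj, Matrix.mul_apply (M := _ * _), Matrix.transpose_apply, Matrix.of_apply]
  simp only [Matrix.mul_apply (M := Matrix.of _), Matrix.of_apply]
  refine Finset.measurable_sum _ fun b _ => (Finset.measurable_sum _ fun a _ => ?_).mul
    (by fun_prop)
  exact Measurable.mul (by fun_prop) (hinv a b)

lemma integrable_colProj_apply {d k : ℕ} (i j : Fin d) :
    Integrable (fun u => colProj (Matrix.of u) i j) (gaussMat d k) :=
  Integrable.of_bound (measurable_colProj_apply i j).aestronglyMeasurable 1
    (Filter.Eventually.of_forall fun _ => abs_colProj_apply_le_one _ i j)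

/-! ### Gaussian matrices have full column rank almost surely -/

lemma pi_absolutelyContinuous {α : Type*} [MeasurableSpace α] {μ ν : Measure α} [SigmaFinite μ]
    [SigmaFinite ν] (h : μ ≪ ν) (n : ℕ) :
    Measure.pi (fun _ : Fin n => μ) ≪ Measure.pi (fun _ : Fin n => ν) := by
  induction n with
  | zero =>
    rw [Measure.pi_of_empty, Measure.pi_of_empty]
  | succ n ih =>
    have h1 := (measurePreserving_piFinSuccAbove (fun _ : Fin (n + 1) => μ) 0).symm
    have h2 := (measurePreserving_piFinSuccAbove (fun _ : Fin (n + 1) => ν) 0).symm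
    rw [← h1.map_eq, ← h2.map_eq]
    exact (h.prod ih).map h1.measurable

/-- On the line `u + t E`, with `E` the `d × k` matrix having the identity as top block, the top
`k × k` minor is a monic polynomial in `t`, hence vanishes for finitely many `t` only. By
disintegration of Lebesgue measure along these lines, the minor is almost everywhere nonzero. -/
lemma ae_det_top_ne_zero {d k : ℕ} (hk : k ≤ d) :
    ∀ᵐ u ∂(gaussMat d k), ((Matrix.of u).submatrix (Fin.castLE hk) id).det ≠ 0 := by
  have hac : gaussMat d k ≪ volume :=
    pi_absolutelyContinuous
      (pi_absolutelyContinuous (gaussianReal_absolutelyContinuous 0 one_ne_zero) k) d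
  refine hac.ae_le ?_
  let E : Fin d → Fin k → ℝ := fun i j => if i = Fin.castLE hk j then 1 else 0
  have hcont : Continuous fun u : Fin d → Fin k → ℝ =>
      ((Matrix.of u).submatrix (Fin.castLE hk) id).det := by
    refine Continuous.matrix_det (continuous_matrix fun i j => ?_)
    simp only [Matrix.submatrix_apply, Matrix.of_apply]
    fun_prop
  refine ae_mem_of_ae_add_linearMap_mem (LinearMap.toSpanSingleton ℝ (Fin d → Fin k → ℝ) E)
    (volume : Measure ℝ) volume (isOpen_ne_fun hcont continuous_const).measurableSet fun u => ?_
  set B := (Matrix.of u).submatrix (Fin.castLE hk) id with hB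
  have hfin : {t : ℝ | (-B).charpoly.IsRoot t}.Finite :=
    Polynomial.finite_setOfPred_isRoot (Matrix.charpoly_monic _).ne_zero
  filter_upwards [hfin.countable.ae_notMem volume] with t ht h0
  apply ht
  rw [Polynomial.IsRoot, Matrix.eval_charpoly, ← h0]
  congr 1
  ext i j
  simp [hB, E, Matrix.scalar_apply, Matrix.diagonal_apply, add_comm]

lemma ae_mulVec_injective {d k : ℕ} (hk : k ≤ d) :
    ∀ᵐ u ∂(gaussMat d k), Function.Injective (Matrix.of u).mulVec := by
  filter_upwards [ae_det_top_ne_zero hk] with u hu x y hxy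
  refine Matrix.mulVec_injective_iff_isUnit.2
    ((Matrix.isUnit_iff_isUnit_det _).2 (isUnit_iff_ne_zero.2 hu)) ?_
  ext i
  exact congrFun hxy (Fin.castLE hk i)

lemma isUnit_det_transpose_mul_mul {d k : ℕ} {A : Matrix (Fin d) (Fin d) ℝ} (hA : A.PosDef)
    {V : Matrix (Fin d) (Fin k) ℝ} (hV : Function.Injective V.mulVec) :
    IsUnit (Vᵀ * A * V).det := by
  have h := hA.conjTranspose_mul_mul_same hV
  rw [Matrix.conjTranspose_eq_transpose_of_trivial] at h
  exact isUnit_iff_ne_zero.2 h.det_pos.ne'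

lemma isUnit_det_transpose_mul_self {d k : ℕ}
    {V : Matrix (Fin d) (Fin k) ℝ} (hV : Function.Injective V.mulVec) :
    IsUnit (Vᵀ * V).det := by
  simpa using isUnit_det_transpose_mul_mul Matrix.PosDef.one hV

/-! ### The expected projection -/

lemma integral_colProj_offDiag {d k : ℕ} {i j : Fin d} (hij : i ≠ j) :
    ∫ u, colProj (Matrix.of u) i j ∂(gaussMat d k) = 0 := by
  let ε : Fin d → ℝ := fun l => if l = i then -1 else 1
  have hε (l : Fin d) : ε l = -1 ∨ ε l = 1 := by
    by_cases h : l = i <;> simp [ε, h]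
  have hmp : MeasurePreserving (fun (u : Fin d → Fin k → ℝ) l m => ε l * u l m)
      (gaussMat d k) (gaussMat d k) := by
    refine measurePreserving_pi _ _ fun l => measurePreserving_pi _ _ fun m => ?_
    rcases hε l with h | h
    · refine ⟨by fun_prop, ?_⟩
      have hf : HMul.hMul (ε l) = fun x : ℝ => -x := by
        ext x
        simp [h]
      rw [hf]
      simpa using gaussianReal_map_neg (μ := 0) (v := 1)
    · have hf : HMul.hMul (ε l) = (id : ℝ → ℝ) := by
        ext x
        simp [h]
      rw [hf]
      exact MeasurePreserving.id _
  have hP (u : Fin d → Fin k → ℝ) :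
      colProj (Matrix.of fun l m => ε l * u l m) i j = -colProj (Matrix.of u) i j := by
    have hQ : (Matrix.diagonal ε)ᵀ * Matrix.diagonal ε = 1 := by
      rw [Matrix.diagonal_transpose, Matrix.diagonal_mul_diagonal, ← Matrix.diagonal_one]
      congr 1
      ext l
      rcases hε l with h | h <;> simp [h]
    have hu : (Matrix.of fun l m => ε l * u l m) = Matrix.diagonal ε * Matrix.of u := by
      ext l m
      simp [Matrix.diagonal_mul]
    rw [hu, colProj_orthogonal_mul _ _ hQ, Matrix.diagonal_transpose, Matrix.mul_diagonal,
      Matrix.diagonal_mul]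
    simp [ε, hij.symm]
  have h : ∫ u, colProj (Matrix.of u) i j ∂(gaussMat d k) =
      ∫ u, colProj (Matrix.of fun l m => ε l * u l m) i j ∂(gaussMat d k) := by
    conv_lhs => rw [← hmp.map_eq]
    exact integral_map hmp.measurable.aemeasurable
      (measurable_colProj_apply i j).aestronglyMeasurable
  simp only [hP, integral_neg] at h
  linarith

lemma integral_colProj_diag_eq {d k : ℕ} (i j : Fin d) :
    ∫ u, colProj (Matrix.of u) i i ∂(gaussMat d k) =
      ∫ u, colProj (Matrix.of u) j j ∂(gaussMat d k) := by
  have hmp : MeasurePreserving (fun (u : Fin d → Fin k → ℝ) l => u (Equiv.swap i j l))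
      (gaussMat d k) (gaussMat d k) := by
    have := measurePreserving_arrowCongr'
      (fun _ : Fin d => Measure.pi fun _ : Fin k => gaussianReal 0 1)
      (fun _ : Fin d => Measure.pi fun _ : Fin k => gaussianReal 0 1)
      (Equiv.swap i j) (MeasurableEquiv.refl _) (fun _ => MeasurePreserving.id _)
    exact this
  have hP (u : Fin d → Fin k → ℝ) :
      colProj (Matrix.of fun l => u (Equiv.swap i j l)) i i = colProj (Matrix.of u) j j := by
    have h := colProj_submatrix (Matrix.of u) (Equiv.swap i j)
    have h' := congrFun (congrFun h i) i
    rw [Matrix.submatrix_apply, Equiv.swap_apply_left] at h'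
    exact h'
  conv_lhs => rw [← hmp.map_eq]
  rw [integral_map hmp.measurable.aemeasurable
    (measurable_colProj_apply i i).aestronglyMeasurable]
  simp only [hP]

/-- The common value of the diagonal entries of the expected projection is found from its
trace `k`. -/
lemma integral_colProj_diag {d k : ℕ} (hd : 0 < d) (hk : k ≤ d) (i : Fin d) :
    ∫ u, colProj (Matrix.of u) i i ∂(gaussMat d k) = k / d := by
  have htr : ∫ u, (colProj (Matrix.of u)).trace ∂(gaussMat d k) = k := by
    have : (fun u => (colProj (Matrix.of u)).trace) =ᵐ[gaussMat d k] fun _ => (k : ℝ) := by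
      filter_upwards [ae_mulVec_injective hk] with u hu
      exact colProj_trace (isUnit_det_transpose_mul_self hu)
    rw [integral_congr_ae this]
    simp
  simp only [Matrix.trace, Matrix.diag_apply] at htr
  rw [integral_finsetSum _ fun l _ => integrable_colProj_apply l l,
    Finset.sum_congr rfl fun l _ => integral_colProj_diag_eq l i] at htr
  have hd' : (d : ℝ) ≠ 0 := by positivity
  rw [eq_div_iff hd', ← htr]
  simp [mul_comm]

lemma trace_mul_colProj {d k : ℕ} (M : Matrix (Fin d) (Fin d) ℝ)
    (U : Matrix (Fin d) (Fin k) ℝ) :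
    (M * colProj U).trace = ∑ i, ∑ j, M i j * colProj U j i := by
  simp [Matrix.trace, Matrix.mul_apply]

lemma integrable_trace_mul_colProj {d k : ℕ} (M : Matrix (Fin d) (Fin d) ℝ) :
    Integrable (fun u => (M * colProj (Matrix.of u)).trace) (gaussMat d k) := by
  simp only [trace_mul_colProj]
  exact integrable_finsetSum _ fun i _ => integrable_finsetSum _ fun j _ =>
    (integrable_colProj_apply j i).const_mul _

lemma integral_trace_mul_colProj {d k : ℕ} (hd : 0 < d) (hk : k ≤ d)
    (M : Matrix (Fin d) (Fin d) ℝ) :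
    ∫ u, (M * colProj (Matrix.of u)).trace ∂(gaussMat d k) = k / d * M.trace := by
  have hint (i j : Fin d) :
      Integrable (fun u => M i j * colProj (Matrix.of u) j i) (gaussMat d k) :=
    (integrable_colProj_apply j i).const_mul _
  simp only [trace_mul_colProj]
  rw [integral_finsetSum _ fun i _ => integrable_finsetSum _ fun j _ => hint i j, Matrix.trace,
    Finset.mul_sum]
  refine Finset.sum_congr rfl fun i _ => ?_
  rw [integral_finsetSum _ fun j _ => hint i j,
    Finset.sum_eq_single i]
  · rw [integral_const_mul, integral_colProj_diag hd hk, Matrix.diag_apply, mul_comm]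
  · intro j _ hj
    rw [integral_const_mul, integral_colProj_offDiag hj, mul_zero]
  · simp

/-! ### The potential after one update -/

/-- In the scaled directions `V = LᵀU` the Gram matrix `VᵀGV` is `UᵀU`, so the rank-`k` term removed
from `G` is `W P Wᵀ` with `W = GLᵀ` and `P` the projection onto the columns of `U`; the term that is
added contributes exactly `k` to `tr(A⁻¹ ·)`. -/
lemma trace_blockBFGS_scaled {d k : ℕ} {A G L : Matrix (Fin d) (Fin d) ℝ} (hA : A.PosDef)
    (hG : G.PosDef) (hL : Lᵀ * L = G⁻¹) {U : Matrix (Fin d) (Fin k) ℝ}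
    (hU : Function.Injective U.mulVec) :
    (A⁻¹ * (blockBFGS G A (Lᵀ * U) - A)).trace =
      (A⁻¹ * G).trace - d + k - (((G * Lᵀ)ᵀ * A⁻¹ * (G * Lᵀ)) * colProj U).trace := by
  have hAu : IsUnit A.det := isUnit_iff_ne_zero.2 hA.det_pos.ne'
  have hGu : IsUnit G.det := isUnit_iff_ne_zero.2 hG.det_pos.ne'
  have hGt : Gᵀ = G := by
    simpa [Matrix.conjTranspose_eq_transpose_of_trivial] using hG.isHermitian.eq
  have hLGL : L * G * Lᵀ = 1 := by
    rw [mul_eq_one_comm, ← Matrix.mul_assoc, hL, Matrix.nonsing_inv_mul _ hGu]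
  have hV : Function.Injective (Lᵀ * U).mulVec := by
    intro x y hxy
    apply hU
    have h := congrArg (fun v => (L * G) *ᵥ v) hxy
    simpa only [Matrix.mulVec_mulVec, ← Matrix.mul_assoc, hLGL, Matrix.one_mul] using h
  have hVA := isUnit_det_transpose_mul_mul hA hV
  have hgram : (Lᵀ * U)ᵀ * G * (Lᵀ * U) = Uᵀ * U := by
    calc (Lᵀ * U)ᵀ * G * (Lᵀ * U) = Uᵀ * (L * G * Lᵀ) * U := by
          simp only [Matrix.transpose_mul, Matrix.transpose_transpose, Matrix.mul_assoc]
      _ = Uᵀ * U := by rw [hLGL, Matrix.mul_one]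
  have h1 : A⁻¹ * (G * (Lᵀ * U) * ((Lᵀ * U)ᵀ * G * (Lᵀ * U))⁻¹ * (Lᵀ * U)ᵀ * G) =
      (A⁻¹ * (G * Lᵀ) * colProj U) * (G * Lᵀ)ᵀ := by
    rw [hgram, colProj]
    simp only [Matrix.transpose_mul, Matrix.transpose_transpose, Matrix.mul_assoc, hGt]
  have h2 : (A⁻¹ * (A * (Lᵀ * U) * ((Lᵀ * U)ᵀ * A * (Lᵀ * U))⁻¹ * (Lᵀ * U)ᵀ * A)).trace = k := by
    generalize Lᵀ * U = V at hVA
    calc (A⁻¹ * (A * V * (Vᵀ * A * V)⁻¹ * Vᵀ * A)).trace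
        = ((A⁻¹ * A) * V * ((Vᵀ * A * V)⁻¹ * (Vᵀ * A))).trace := by
          simp only [Matrix.mul_assoc]
      _ = ((Vᵀ * A * V)⁻¹ * (Vᵀ * A * V)).trace := by
          rw [Matrix.nonsing_inv_mul _ hAu, Matrix.one_mul, Matrix.trace_mul_comm]
          simp only [Matrix.mul_assoc]
      _ = k := by rw [Matrix.nonsing_inv_mul _ hVA]; simp
  rw [blockBFGS, Matrix.mul_sub, Matrix.mul_add, Matrix.mul_sub, Matrix.trace_sub,
    Matrix.trace_add, Matrix.trace_sub, h2, h1, Matrix.trace_mul_comm _ (G * Lᵀ)ᵀ,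
    Matrix.nonsing_inv_mul _ hAu, Matrix.trace_one, Fintype.card_fin]
  simp only [Matrix.mul_assoc]
  ring

/-- **Theorem 5.6**: the block BFGS update with scaled Gaussian directions `LᵀU`, where
`LᵀL = G⁻¹`, satisfies `E[σ_A(G₊)] ≤ (1 − k/d)·σ_A(G)` with
`σ_A(G) = tr(A⁻¹(G − A))`. -/
theorem scaled_blockBFGS_sigma_decrease {d k : ℕ} (hd : 0 < d) (hk : k ≤ d)
    (A G : Matrix (Fin d) (Fin d) ℝ) (hA : A.PosDef) (hG : G.PosDef)
    (hGA : (G - A).PosSemidef)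
    (L : Matrix (Fin d) (Fin d) ℝ) (hL : Lᵀ * L = G⁻¹)
    {Ω : Type*} [MeasureSpace Ω] [IsProbabilityMeasure (ℙ : Measure Ω)]
    (U : Ω → Matrix (Fin d) (Fin k) ℝ)
    (hU : Measure.map (fun ω => fun i j => U ω i j) ℙ =
      Measure.pi fun _ : Fin d => Measure.pi fun _ : Fin k => gaussianReal 0 1) :
    (∫ ω, (A⁻¹ * (blockBFGS G A (Lᵀ * U ω) - A)).trace ∂ℙ) ≤
      (1 - (k : ℝ) / d) * (A⁻¹ * (G - A)).trace := by
  -- The map of a function that is not a.e.-measurable is `0`, which is not a probability measure.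
  have hUm : AEMeasurable (fun ω => fun i j => U ω i j) (ℙ : Measure Ω) := by
    refine AEMeasurable.of_map_ne_zero ?_
    rw [hU]
    exact IsProbabilityMeasure.ne_zero _
  have hAu : IsUnit A.det := isUnit_iff_ne_zero.2 hA.det_pos.ne'
  have hGu : IsUnit G.det := isUnit_iff_ne_zero.2 hG.det_pos.ne'
  have hGt : Gᵀ = G := by
    simpa [Matrix.conjTranspose_eq_transpose_of_trivial] using hG.isHermitian.eq
  set M := (G * Lᵀ)ᵀ * A⁻¹ * (G * Lᵀ) with hM
  have hMtr : M.trace = (A⁻¹ * G).trace := by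
    calc M.trace = ((A⁻¹ * (G * Lᵀ)) * (G * Lᵀ)ᵀ).trace := by
          rw [hM, Matrix.mul_assoc, Matrix.trace_mul_comm]
      _ = (A⁻¹ * (G * (Lᵀ * L) * G)).trace := by
          simp only [Matrix.transpose_mul, Matrix.transpose_transpose, Matrix.mul_assoc, hGt]
      _ = (A⁻¹ * G).trace := by rw [hL, Matrix.mul_nonsing_inv _ hGu, Matrix.one_mul]
  have hinj : ∀ᵐ ω ∂(ℙ : Measure Ω), Function.Injective (U ω).mulVec := by
    have h := ae_mulVec_injective hk
    rw [gaussMat, ← hU] at h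
    exact ae_of_ae_map hUm h
  have hint : ∫ ω, (M * colProj (U ω)).trace ∂ℙ = k / d * M.trace := by
    rw [← integral_trace_mul_colProj hd hk M, gaussMat, ← hU]
    refine (integral_map (f := fun u => (M * colProj (Matrix.of u)).trace) hUm ?_).symm
    rw [hU]
    exact (integrable_trace_mul_colProj M).aestronglyMeasurable
  have hintble : Integrable (fun ω => (M * colProj (U ω)).trace) (ℙ : Measure Ω) := by
    have h := integrable_trace_mul_colProj (k := k) M
    rw [gaussMat, ← hU] at h
    exact h.comp_aemeasurable hUm
  apply le_of_eq
  calc ∫ ω, (A⁻¹ * (blockBFGS G A (Lᵀ * U ω) - A)).trace ∂ℙ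
      = ∫ ω, ((A⁻¹ * G).trace - d + k - (M * colProj (U ω)).trace) ∂ℙ := by
        refine integral_congr_ae ?_
        filter_upwards [hinj] with ω hω
        exact trace_blockBFGS_scaled hA hG hL hω
    _ = (A⁻¹ * G).trace - d + k - k / d * (A⁻¹ * G).trace := by
        rw [integral_sub (integrable_const _) hintble, hint, hMtr]
        simp
    _ = (1 - (k : ℝ) / d) * (A⁻¹ * (G - A)).trace := by
        rw [Matrix.mul_sub, Matrix.trace_sub, Matrix.nonsing_inv_mul _ hAu, Matrix.trace_one,
          Fintype.card_fin]
        have hd' : (d : ℝ) ≠ 0 := by positivity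
        field_simp
        ring
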